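/- Let m and n be positive integers with m ≥ 1 and n ≥ 2. The number of positive m-divisible non-crossing partitions of type B_n (i.e., elements of NC^B_+(m,n)) equals C((m+1)n - 1, n), and this equals the sum over a = 0, 1, ..., n of C((m+1)n - a - 2, n - a). -/

import Mathlib

/-- A finpartition of `Fin N` (points placed in this order around a circle) is non-crossing
if there are no `a < b < c < d` with `a, c` in one block and `b, d` in a different block. -/
def IsNoncrossing {N : ℕ} (P : Finpartition (Finset.univ : Finset (Fin N))) : Prop :=
  ∀ B ∈ P.parts, ∀ C ∈ P.parts, ∀ a b c d : Fin N,
    a < b → b < c → c < d → a ∈ B → c ∈ B → b ∈ C → d ∈ C → B = C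

/-- On the ground set `Fin (2N)` encoding `1, …, N, -1, …, -N` (index `i < N` encodes `i+1`
and index `i ≥ N` encodes `-(i - N + 1)`), the negation map `i ↦ -i`. -/
def negB (N : ℕ) (x : Fin (2 * N)) : Fin (2 * N) :=
  ⟨(x.val + N) % (2 * N), Nat.mod_lt _ (by have := x.isLt; omega)⟩

/-!
Put `N = mn` and lift everything to `ℤ`. An invariant non-crossing partition becomes an equivalence
relation whose non-zero blocks, up to translation by `N`, are arcs contained in windows `[x, x + N)`
starting at their first element `x`; the zero block consists of the points on no arc. The arcs are
nested, so they are recovered from their sizes `F x` by the cycle lemma: following the lattice path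
with steps `F x - 1`, the point `y` lies on the arc of the last `x ≤ y` at which the path is at most
at its height after `y`. Every `N`-periodic `F` with sum at most `N` over a period occurs.

The partition is `m`-divisible exactly when `F` takes multiples of `m` as values, and it is positive
exactly when no arc starts at `1`, that is, at the point `0` of `ℤ`. So one counts the functions on
`N` points with one prescribed zero whose values are multiples of `m` with sum at most `mn`, which
are weak compositions of `n` into `N` parts.
-/

section ArcSystems

open Finset

/-- The lattice path on `ℤ` with step `F w - 1` from `w` to `w + 1` and height `0` at `0`. -/
noncomputable def pathHeight (F : ℤ → ℕ) (x : ℤ) : ℤ :=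
  ∑ w ∈ Ico 0 x, ((F w : ℤ) - 1) - ∑ w ∈ Ico x 0, ((F w : ℤ) - 1)

variable {N : ℤ} {F : ℤ → ℕ} {A : ℤ → Finset ℤ}

theorem pathHeight_zero : pathHeight F 0 = 0 := by
  simp [pathHeight]

theorem pathHeight_add_one (F : ℤ → ℕ) (x : ℤ) :
    pathHeight F (x + 1) = pathHeight F x + F x - 1 := by
  unfold pathHeight
  rcases le_or_gt 0 x with hx | hx
  · rw [← insert_Ico_right_eq_Ico_add_one hx, sum_insert right_notMem_Ico,
      Ico_eq_empty_of_le (show 0 ≤ x + 1 by omega), Ico_eq_empty_of_le hx, sum_empty]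
    ring
  · rw [← insert_Ico_add_one_left_eq_Ico hx, sum_insert (by simp),
      Ico_eq_empty_of_le (show x + 1 ≤ 0 by omega), Ico_eq_empty_of_le hx.le, sum_empty]
    ring

theorem pathHeight_eq_add_sum {x y : ℤ} (hxy : x ≤ y) :
    pathHeight F y = pathHeight F x + ↑(∑ w ∈ Ico x y, F w) - (y - x) := by
  induction y, hxy using Int.leInduction with
  | base => simp
  | succ y hy ih =>
    rw [pathHeight_add_one, ih, ← insert_Ico_right_eq_Ico_add_one hy, sum_insert right_notMem_Ico]
    push_cast
    ring

theorem pathHeight_add_period (hF : Function.Periodic F N) (x : ℤ) :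
    pathHeight F (x + N) = pathHeight F x + pathHeight F N := by
  have step (x : ℤ) : pathHeight F (x + 1 + N) - pathHeight F (x + 1) =
      pathHeight F (x + N) - pathHeight F x := by
    rw [add_right_comm, pathHeight_add_one, pathHeight_add_one, hF]
    ring
  induction x using Int.induction_on with
  | zero => simp [pathHeight_zero]
  | succ i ih => linarith [step i]
  | pred i ih =>
    have := step (-i - 1)
    rw [sub_add_cancel] at this
    linarith

theorem pathHeight_natCast_mul_period (hF : Function.Periodic F N) (k : ℕ) :
    pathHeight F (k * N) = k * pathHeight F N := by
  induction k with
  | zero => simp [pathHeight_zero]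
  | succ k ih =>
    push_cast
    rw [add_one_mul, pathHeight_add_period hF, ih]
    ring

/-- `A x` is the arc opened at `x`, empty when nothing is opened there: the arcs are pairwise
disjoint, shorter than `N`, nested and invariant under translation by `N`. -/
structure IsArcSystem (N : ℤ) (A : ℤ → Finset ℤ) : Prop where
  subset_Ico (x : ℤ) : A x ⊆ Ico x (x + N)
  eq_of_mem {x x' y : ℤ} : y ∈ A x → y ∈ A x' → x = x'
  nested {x y z : ℤ} : y ∈ A x → x ≤ z → z ≤ y → ∃ w, x ≤ w ∧ z ∈ A w
  add_mem_add_iff {x y : ℤ} : y + N ∈ A (x + N) ↔ y ∈ A x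

/-- The arc opened at `x` passes through `y`: `x` is the last time up to `y` at which the path `h`
is at most at the height it has just after `y`. -/
def Opens (h : ℤ → ℤ) (x y : ℤ) : Prop :=
  x ≤ y ∧ h x ≤ h (y + 1) ∧ ∀ z, x < z → z ≤ y → h (y + 1) < h z

theorem Opens.unique {h : ℤ → ℤ} {x x' y : ℤ} (hx : Opens h x y) (hx' : Opens h x' y) :
    x = x' := by
  by_contra hne
  wlog hlt : x < x' generalizing x x'
  · exact this hx' hx (Ne.symm hne) (by omega)
  have := hx.2.2 x' hlt hx'.1
  have := hx'.2.1
  omega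

namespace IsArcSystem

theorem le_of_mem (hA : IsArcSystem N A) {x y : ℤ} (hy : y ∈ A x) : x ≤ y :=
  (mem_Ico.1 (hA.subset_Ico x hy)).1

theorem lt_of_mem (hA : IsArcSystem N A) {x y : ℤ} (hy : y ∈ A x) : y < x + N :=
  (mem_Ico.1 (hA.subset_Ico x hy)).2

theorem self_mem (hA : IsArcSystem N A) {x y : ℤ} (hy : y ∈ A x) : x ∈ A x := by
  obtain ⟨w, hxw, hw⟩ := hA.nested hy le_rfl (hA.le_of_mem hy)
  obtain rfl := hxw.antisymm (hA.le_of_mem hw)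
  exact hw

theorem periodic_mem (hA : IsArcSystem N A) (x y : ℤ) :
    Function.Periodic (fun t => y + t ∈ A (x + t)) N := fun t => by
  simp only [← add_assoc, hA.add_mem_add_iff]

theorem add_mul_mem_iff (hA : IsArcSystem N A) (x y k : ℤ) :
    y + k * N ∈ A (x + k * N) ↔ y ∈ A x := by
  simpa using iff_of_eq ((hA.periodic_mem x y).int_mul k 0)

theorem periodic_card (hA : IsArcSystem N A) : Function.Periodic (fun x => #(A x)) N := fun x => by
  have : A (x + N) = (A x).map (addRightEmbedding N) := by
    ext y
    rw [← sub_add_cancel y N, hA.add_mem_add_iff, ← addRightEmbedding_apply, mem_map']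
  simp only [this, card_map]

theorem card_biUnion (hA : IsArcSystem N A) (s : Finset ℤ) :
    #(s.biUnion A) = ∑ x ∈ s, #(A x) :=
  Finset.card_biUnion fun _ _ _ _ hne =>
    disjoint_left.2 fun _ hy hy' => hne (hA.eq_of_mem hy hy')

theorem pathHeight_le (hA : IsArcSystem N A) {x y : ℤ} (hy : y ∈ A x) :
    pathHeight (fun x => #(A x)) x ≤ pathHeight (fun x => #(A x)) (y + 1) := by
  have hxy := hA.le_of_mem hy
  have hsub : Ico x (y + 1) ⊆ (Ico x (y + 1)).biUnion A := fun u hu => by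
    rw [mem_Ico] at hu
    obtain ⟨w, hxw, hw⟩ := hA.nested hy hu.1 (by omega)
    have := hA.le_of_mem hw
    exact mem_biUnion.2 ⟨w, mem_Ico.2 (by omega), hw⟩
  have hcard := card_le_card hsub
  rw [hA.card_biUnion, Int.card_Ico] at hcard
  rw [pathHeight_eq_add_sum (show x ≤ y + 1 by omega)]
  omega

theorem pathHeight_lt (hA : IsArcSystem N A) {y z : ℤ} (hz : ∀ x, y ∈ A x → x < z) (hzy : z ≤ y) :
    pathHeight (fun x => #(A x)) (y + 1) < pathHeight (fun x => #(A x)) z := by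
  have hsub : (Ico z (y + 1)).biUnion A ⊆ Ico z y := fun u hu => by
    obtain ⟨w, hw, huw⟩ := mem_biUnion.1 hu
    rw [mem_Ico] at hw ⊢
    have := hA.le_of_mem huw
    refine ⟨by omega, ?_⟩
    by_contra! hyu
    obtain ⟨w', hww', hw'⟩ := hA.nested huw (by omega) hyu
    have := hz w' hw'
    omega
  have hcard := card_le_card hsub
  rw [hA.card_biUnion, Int.card_Ico] at hcard
  rw [pathHeight_eq_add_sum (show z ≤ y + 1 by omega)]
  omega

theorem opens_of_mem (hA : IsArcSystem N A) {x y : ℤ} (hy : y ∈ A x) :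
    Opens (pathHeight fun x => #(A x)) x y :=
  ⟨hA.le_of_mem hy, hA.pathHeight_le hy, fun _ hz hzy =>
    hA.pathHeight_lt (fun _ hx' => (hA.eq_of_mem hx' hy).trans_lt hz) hzy⟩

theorem mem_iff_opens (hA : IsArcSystem N A) {x y : ℤ} :
    y ∈ A x ↔ Opens (pathHeight fun x => #(A x)) x y := by
  refine ⟨hA.opens_of_mem, fun hx => ?_⟩
  by_cases hcov : ∃ x', y ∈ A x'
  · obtain ⟨x', hx'⟩ := hcov
    rwa [(hA.opens_of_mem hx').unique hx] at hx'
  · exact absurd hx.2.1 (hA.pathHeight_lt (fun x' hx' => absurd ⟨x', hx'⟩ hcov) hx.1).not_ge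

theorem pathHeight_le_add (hA : IsArcSystem N A) {z y : ℤ} (hzy : z ≤ y) (hN : 0 ≤ N) :
    pathHeight (fun x => #(A x)) y ≤ pathHeight (fun x => #(A x)) z + N := by
  have hsub : (Ico z y).biUnion A ⊆ Ico z (y + N) := fun u hu => by
    obtain ⟨w, hw, huw⟩ := mem_biUnion.1 hu
    rw [mem_Ico] at hw ⊢
    have := hA.le_of_mem huw
    have := hA.lt_of_mem huw
    omega
  have hcard := card_le_card hsub
  rw [hA.card_biUnion, Int.card_Ico] at hcard
  rw [pathHeight_eq_add_sum hzy]
  omega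

-- A positive drift over one period would make the path unbounded, against `pathHeight_le_add`.
theorem pathHeight_period_nonpos (hA : IsArcSystem N A) (hN : 0 ≤ N) :
    pathHeight (fun x => #(A x)) N ≤ 0 := by
  have hbound : (N.toNat + 1 : ℕ) * pathHeight (fun x => #(A x)) N ≤ N := by
    rw [← pathHeight_natCast_mul_period hA.periodic_card]
    simpa [pathHeight_zero] using
      hA.pathHeight_le_add (z := 0) (y := (N.toNat + 1 : ℕ) * N) (by positivity) hN
  push_cast [Int.toNat_of_nonneg hN] at hbound
  nlinarith

end IsArcSystem

/-- Admissible arc lengths: `N`-periodic functions with sum at most `N` over a period. -/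
structure IsArcWeight (N : ℤ) (F : ℤ → ℕ) : Prop where
  periodic : Function.Periodic F N
  sum_le : ((∑ x ∈ Ico 0 N, F x : ℕ) : ℤ) ≤ N

theorem IsArcSystem.isArcWeight_card (hN : 0 ≤ N) (hA : IsArcSystem N A) :
    IsArcWeight N fun x => #(A x) where
  periodic := hA.periodic_card
  sum_le := by
    have := pathHeight_eq_add_sum (F := fun x => #(A x)) hN
    rw [pathHeight_zero] at this
    linarith [hA.pathHeight_period_nonpos hN]

theorem IsArcWeight.pathHeight_add_le (hN : 0 ≤ N) (hF : IsArcWeight N F) (x : ℤ) :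
    pathHeight F (x + N) ≤ pathHeight F x := by
  rw [pathHeight_add_period hF.periodic, pathHeight_eq_add_sum hN, pathHeight_zero]
  linarith [hF.sum_le]

theorem IsArcWeight.lt_add_of_opens (hN : 0 < N) (hF : IsArcWeight N F) {x y : ℤ}
    (h : Opens (pathHeight F) x y) : y < x + N := by
  by_contra! hle
  have := h.2.2 (x + N) (by omega) hle
  linarith [hF.pathHeight_add_le hN.le x, h.2.1]

theorem exists_opens {h : ℤ → ℤ} {x y : ℤ} (hxy : x ≤ y) (hx : h x ≤ h (y + 1)) :
    ∃ w, x ≤ w ∧ Opens h w y := by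
  obtain ⟨w, ⟨hwy, hw⟩, hmax⟩ := Int.exists_greatest_of_bdd
    (P := fun w => w ≤ y ∧ h w ≤ h (y + 1)) ⟨y, fun _ hw => hw.1⟩ ⟨x, hxy, hx⟩
  refine ⟨w, hmax x ⟨hxy, hx⟩, hwy, hw, fun t hwt hty => ?_⟩
  by_contra! hle
  exact (hmax t ⟨hty, hle⟩).not_gt hwt

theorem Opens.nested {h : ℤ → ℤ} {x y z : ℤ} (hy : Opens h x y) (hxz : x ≤ z) (hzy : z ≤ y) :
    ∃ w, x ≤ w ∧ Opens h w z := by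
  refine exists_opens hxz ?_
  rcases hzy.eq_or_lt with rfl | hlt
  · exact hy.2.1
  · exact hy.2.1.trans (hy.2.2 (z + 1) (by omega) (by omega)).le

theorem opens_add_iff {h : ℤ → ℤ} {c : ℤ} (hh : ∀ x, h (x + N) = h x + c) {x y : ℤ} :
    Opens h (x + N) (y + N) ↔ Opens h x y := by
  simp only [Opens, add_right_comm y N 1, hh, add_le_add_iff_right]
  refine and_congr_right fun _ => and_congr_right fun _ => ⟨fun H z hxz hzy => ?_,
    fun H z hxz hzy => ?_⟩
  · have := H (z + N) (by omega) (by omega)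
    rw [hh] at this
    omega
  · have := H (z - N) (by omega) (by omega)
    have := hh (z - N)
    rw [sub_add_cancel] at this
    omega

open Classical in
/-- The arcs cut out by the path of `F`. -/
noncomputable def pathArc (N : ℤ) (F : ℤ → ℕ) (x : ℤ) : Finset ℤ :=
  {y ∈ Ico x (x + N) | Opens (pathHeight F) x y}

open Classical in
theorem IsArcWeight.mem_pathArc (hN : 0 < N) (hF : IsArcWeight N F) {x y : ℤ} :
    y ∈ pathArc N F x ↔ Opens (pathHeight F) x y := by
  rw [pathArc, mem_filter, mem_Ico, and_iff_right_iff_imp]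
  exact fun h => ⟨h.1, hF.lt_add_of_opens hN h⟩

theorem IsArcWeight.isArcSystem_pathArc (hN : 0 < N) (hF : IsArcWeight N F) :
    IsArcSystem N (pathArc N F) where
  subset_Ico _ _ hy :=
    have hxy := (hF.mem_pathArc hN).1 hy
    mem_Ico.2 ⟨hxy.1, hF.lt_add_of_opens hN hxy⟩
  eq_of_mem hy hy' := ((hF.mem_pathArc hN).1 hy).unique ((hF.mem_pathArc hN).1 hy')
  nested hy := by simpa only [hF.mem_pathArc hN] using ((hF.mem_pathArc hN).1 hy).nested
  add_mem_add_iff {_ _} := by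
    rw [hF.mem_pathArc hN, hF.mem_pathArc hN, opens_add_iff (pathHeight_add_period hF.periodic)]

/-- The path can only go down by one at each step, so it visits every level on the way. -/
theorem IsArcWeight.exists_opens_of_lt (hN : 0 < N) (hF : IsArcWeight N F) {x : ℤ} {l : ℕ}
    (hl : l < F x) : ∃ y, Opens (pathHeight F) x y ∧ pathHeight F (y + 1) = pathHeight F x + l := by
  obtain ⟨y, ⟨hxy, hy⟩, hmin⟩ := Int.exists_least_of_bdd
    (P := fun y => x ≤ y ∧ pathHeight F (y + 1) ≤ pathHeight F x + l) ⟨x, fun _ hw => hw.1⟩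
    ⟨x + N - 1, by omega, by linarith [sub_add_cancel (x + N) 1 ▸ hF.pathHeight_add_le hN.le x]⟩
  have habove (z : ℤ) (hxz : x < z) (hzy : z ≤ y) : pathHeight F x + l < pathHeight F z := by
    by_contra! hle
    have := hmin (z - 1) ⟨by omega, by rwa [sub_add_cancel]⟩
    omega
  have heq : pathHeight F (y + 1) = pathHeight F x + l := by
    have hstep := pathHeight_add_one F y
    rcases hxy.eq_or_lt with rfl | hlt
    · omega
    · have := habove y hlt le_rfl
      omega
  exact ⟨y, ⟨hxy, by omega, fun z hxz hzy => heq ▸ habove z hxz hzy⟩, heq⟩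

theorem IsArcWeight.card_pathArc (hN : 0 < N) (hF : IsArcWeight N F) (x : ℤ) :
    #(pathArc N F x) = F x := by
  rw [← card_range (F x)]
  refine card_bij (fun y _ => (pathHeight F (y + 1) - pathHeight F x).toNat)
    (fun y hy => ?_) (fun y hy y' hy' heq => ?_) (fun l hl => ?_)
  · obtain ⟨hxy, hle, hlt⟩ := (hF.mem_pathArc hN).1 hy
    have hstep := pathHeight_add_one F x
    rw [mem_range]
    rcases hxy.eq_or_lt with rfl | hxy
    · omega
    · have := hlt (x + 1) (by omega) (by omega)
      omega
  · obtain ⟨hxy, hle, hlt⟩ := (hF.mem_pathArc hN).1 hy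
    obtain ⟨hxy', hle', hlt'⟩ := (hF.mem_pathArc hN).1 hy'
    rcases lt_trichotomy y y' with h | h | h
    · have := hlt' (y + 1) (by omega) (by omega)
      omega
    · exact h
    · have := hlt (y' + 1) (by omega) (by omega)
      omega
  · obtain ⟨y, hy, heq⟩ := hF.exists_opens_of_lt hN (mem_range.1 hl)
    exact ⟨y, (hF.mem_pathArc hN).2 hy, by simp [heq]⟩

/-- An arc system is determined by its arc lengths, which are arbitrary admissible weights. -/
noncomputable def arcSystemEquivWeight (hN : 0 < N) :
    {A // IsArcSystem N A} ≃ {F // IsArcWeight N F} where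
  toFun A := ⟨fun x => #(A.1 x), A.2.isArcWeight_card hN.le⟩
  invFun F := ⟨pathArc N F, F.2.isArcSystem_pathArc hN⟩
  left_inv := fun ⟨A, hA⟩ => Subtype.ext <| funext fun x => by
    ext y
    rw [(hA.isArcWeight_card hN.le).mem_pathArc hN, hA.mem_iff_opens]
  right_inv := fun ⟨_, hF⟩ => Subtype.ext <| funext fun x => hF.card_pathArc hN x

end ArcSystems

section TypeBSetoids

open Finset

variable {N : ℤ} {r : Setoid ℤ} {A : ℤ → Finset ℤ}

theorem rel_add_mul {c : ℤ} (hr : ∀ y, r y (y + c)) (y k : ℤ) : r y (y + k * c) := by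
  have hper : Function.Periodic (fun t => r y (y + t)) c := fun t => by
    have := hr (y + t)
    rw [add_assoc] at this
    exact propext ⟨fun h => r.trans' h (r.symm' this), fun h => r.trans' h this⟩
  simpa using iff_of_eq (hper.int_mul k 0)

/-- The lift to `ℤ` of a non-crossing partition of the circle `ℤ / 2N` which is invariant under the
antipodal map `y ↦ y + N`. The points `y` with `r y (y + N)` are those over the zero block. -/
structure IsTypeBSetoid (N : ℤ) (r : Setoid ℤ) : Prop where
  rel_add_two_mul (y : ℤ) : r y (y + 2 * N)
  rel_add_add_iff {y z : ℤ} : r (y + N) (z + N) ↔ r y z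
  noncrossing {a b c d : ℤ} : a < b → b < c → c < d → d < a + 2 * N → r a c → r b d → r a b

open Classical in
/-- The elements of the class of `x` in `[x, x + N)`, provided that `x` is not preceded by an
element of its class in `[x - N, x)`; otherwise empty. -/
noncomputable def setoidArc (N : ℤ) (r : Setoid ℤ) (x : ℤ) : Finset ℤ :=
  {y ∈ Ico x (x + N) | r x y ∧ ∀ z ∈ Ico (x - N) x, ¬ r z x}

open Classical in
theorem mem_setoidArc {x y : ℤ} : y ∈ setoidArc N r x ↔
    (x ≤ y ∧ y < x + N) ∧ r x y ∧ ∀ z, x - N ≤ z → z < x → ¬ r z x := by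
  simp only [setoidArc, mem_filter, mem_Ico, and_imp]

theorem mem_setoidArc_iff_of_mem {x y u : ℤ} (hu : u ∈ setoidArc N r x) :
    y ∈ setoidArc N r x ↔ y ∈ Ico (x - N) (x + N) ∧ r x y := by
  obtain ⟨-, -, hfirst⟩ := mem_setoidArc.1 hu
  rw [mem_setoidArc, mem_Ico]
  constructor
  · rintro ⟨hxy, h, -⟩
    exact ⟨by omega, h⟩
  · rintro ⟨hy, h⟩
    have hxy : x ≤ y := by
      by_contra! hlt
      exact hfirst y hy.1 hlt (r.symm' h)
    exact ⟨⟨hxy, hy.2⟩, h, hfirst⟩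

namespace IsTypeBSetoid

theorem rel_add_mul_iff (hr : IsTypeBSetoid N r) (y z k : ℤ) : r y (z + k * (2 * N)) ↔ r y z :=
  have hz := rel_add_mul hr.rel_add_two_mul z k
  ⟨fun h => r.trans' h (r.symm' hz), fun h => r.trans' h hz⟩

theorem exists_mem_Ico_rel_iff (hr : IsTypeBSetoid N r) {x : ℤ} :
    (∃ z ∈ Ico (x - N) x, r z x) ↔ ∃ u ∈ Ico (x + N) (x + 2 * N), r x u := by
  constructor
  · rintro ⟨z, hz, h⟩
    rw [mem_Ico] at hz
    exact ⟨z + 2 * N, mem_Ico.2 (by omega), r.trans' (r.symm' h) (hr.rel_add_two_mul z)⟩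
  · rintro ⟨u, hu, h⟩
    rw [mem_Ico] at hu
    have hu' := hr.rel_add_two_mul (u - 2 * N)
    rw [sub_add_cancel] at hu'
    exact ⟨u - 2 * N, mem_Ico.2 (by omega), r.trans' hu' (r.symm' h)⟩

theorem setoidArc_eq_empty_iff (hN : 0 < N) (hr : IsTypeBSetoid N r) {x : ℤ} :
    setoidArc N r x = ∅ ↔ ∃ u ∈ Ico (x + N) (x + 2 * N), r x u := by
  rw [← hr.exists_mem_Ico_rel_iff]
  constructor
  · intro h
    by_contra! hfirst
    refine notMem_empty x (h ▸ mem_setoidArc.2 ⟨by omega, r.refl' x, fun z hz hzx => ?_⟩)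
    exact hfirst z (mem_Ico.2 ⟨hz, hzx⟩)
  · rintro ⟨z, hz, h⟩
    rw [mem_Ico] at hz
    exact eq_empty_of_forall_notMem fun y hy => (mem_setoidArc.1 hy).2.2 z hz.1 hz.2 h

theorem rel_antipode_congr (hr : IsTypeBSetoid N r) {y z : ℤ} (h : r y z) :
    r y (y + N) ↔ r z (z + N) :=
  have h' := hr.rel_add_add_iff.2 h
  ⟨fun hy => r.trans' (r.symm' h) (r.trans' hy h'),
    fun hz => r.trans' h (r.trans' hz (r.symm' h'))⟩

theorem rel_add_mul_of_rel_antipode (hr : IsTypeBSetoid N r) {z : ℤ} (hz : r z (z + N)) (k : ℤ) :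
    r z (z + k * N) := by
  obtain ⟨j, rfl | rfl⟩ := k.even_or_odd'
  · rw [show z + 2 * j * N = z + j * (2 * N) by ring, hr.rel_add_mul_iff]
  · rwa [show z + (2 * j + 1) * N = z + N + j * (2 * N) by ring, hr.rel_add_mul_iff]

-- Two distinct antipodal pairs cross, so they lie in the same block.
theorem rel_of_rel_antipode (hN : 0 < N) (hr : IsTypeBSetoid N r) {y z : ℤ} (hy : r y (y + N))
    (hz : r z (z + N)) : r y z := by
  obtain ⟨k, hk, -⟩ := existsUnique_add_zsmul_mem_Ico hN z y
  rw [Set.mem_Ico, smul_eq_mul] at hk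
  have hk' := hr.rel_add_mul_of_rel_antipode hz k
  refine r.trans' ?_ (r.symm' hk')
  rcases hk.1.eq_or_lt with h | h
  · rw [← h]
  · exact hr.noncrossing h hk.2 (by omega) (by omega) hy ((hr.rel_antipode_congr hk').1 hz)

theorem exists_mem_setoidArc (hN : 0 < N) (hr : IsTypeBSetoid N r) {y : ℤ} (hy : ¬ r y (y + N)) :
    ∃ x, y ∈ setoidArc N r x := by
  obtain ⟨x, ⟨hx, hxy, h⟩, hmin⟩ := Int.exists_least_of_bdd
    (P := fun x => y - N < x ∧ x ≤ y ∧ r x y) ⟨y - N, fun _ hx => hx.1.le⟩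
    ⟨y, by omega, le_rfl, r.refl' y⟩
  have hy' : ¬ r (y - N) y := by
    rwa [← hr.rel_add_add_iff, sub_add_cancel]
  refine ⟨x, mem_setoidArc.2 ⟨by omega, h, fun z hxz hzx hz => ?_⟩⟩
  have hzy := r.trans' hz h
  rcases lt_trichotomy z (y - N) with hlt | rfl | hgt
  · have hanti : r (y - N) (z + N) := by
      have := hr.rel_add_mul_iff (z + N) (y - N) 1
      rw [show y - N + 1 * (2 * N) = y + N by ring, hr.rel_add_add_iff] at this
      exact r.symm' (this.1 hzy)
    rcases hxz.eq_or_lt with rfl | hxz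
    · exact hy' (r.trans' hanti (by rwa [sub_add_cancel]))
    · exact hy' (r.trans'
        (r.symm' (hr.noncrossing hlt hx (by omega) (by omega) hz hanti)) hzy)
  · exact hy' hzy
  · exact (hmin z ⟨hgt, by omega, hzy⟩).not_gt hzx

theorem not_rel_antipode_of_mem (hN : 0 < N) (hr : IsTypeBSetoid N r) {x y : ℤ}
    (hy : y ∈ setoidArc N r x) : ¬ r y (y + N) := by
  obtain ⟨-, h, hfirst⟩ := mem_setoidArc.1 hy
  rw [← hr.rel_antipode_congr h]
  intro hx
  refine hfirst (x - N) le_rfl (by omega) ?_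
  rwa [← hr.rel_add_add_iff, sub_add_cancel]

theorem forall_notMem_setoidArc_iff (hN : 0 < N) (hr : IsTypeBSetoid N r) {y : ℤ} :
    (∀ x, y ∉ setoidArc N r x) ↔ r y (y + N) :=
  ⟨fun h => by_contra fun hy => (hr.exists_mem_setoidArc hN hy).elim h,
    fun hy _ hx => hr.not_rel_antipode_of_mem hN hx hy⟩

theorem setoidArc_unique {x x' y : ℤ} (hx : y ∈ setoidArc N r x) (hx' : y ∈ setoidArc N r x') :
    x = x' := by
  by_contra hne
  wlog hlt : x < x' generalizing x x'
  · exact this hx' hx (Ne.symm hne) (by omega)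
  obtain ⟨hxy, h, -⟩ := mem_setoidArc.1 hx
  obtain ⟨hxy', h', hfirst'⟩ := mem_setoidArc.1 hx'
  exact hfirst' x (by omega) hlt (r.trans' h (r.symm' h'))

theorem setoidArc_nested (hN : 0 < N) (hr : IsTypeBSetoid N r) {x y z : ℤ}
    (hy : y ∈ setoidArc N r x) (hxz : x ≤ z) (hzy : z ≤ y) : ∃ w, x ≤ w ∧ z ∈ setoidArc N r w := by
  rcases hxz.eq_or_lt with rfl | hxz
  · exact ⟨x, le_rfl, (mem_setoidArc_iff_of_mem hy).2 ⟨mem_Ico.2 (by omega), r.refl' x⟩⟩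
  rcases hzy.eq_or_lt with rfl | hzy
  · exact ⟨x, le_rfl, hy⟩
  obtain ⟨hxy, h, hfirst⟩ := mem_setoidArc.1 hy
  have hz : ¬ r z (z + N) := fun hz => hr.not_rel_antipode_of_mem hN hy <|
    (hr.rel_antipode_congr (r.trans' (r.symm'
      (hr.noncrossing hxz hzy (by omega) (by omega) h hz)) h)).1 hz
  obtain ⟨w, hw⟩ := hr.exists_mem_setoidArc hN hz
  obtain ⟨hwz, hrel, -⟩ := mem_setoidArc.1 hw
  refine ⟨w, ?_, hw⟩
  by_contra! hwx
  exact hfirst w (by omega) hwx (hr.noncrossing hwx hxz hzy (by omega) hrel h)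

theorem setoidArc_add_mem_add (hr : IsTypeBSetoid N r) {x y : ℤ} :
    y + N ∈ setoidArc N r (x + N) ↔ y ∈ setoidArc N r x := by
  have hfirst : (∀ z, x + N - N ≤ z → z < x + N → ¬ r z (x + N)) ↔
      ∀ z, x - N ≤ z → z < x → ¬ r z x := by
    rw [← (Equiv.addRight N).forall_congr_right]
    simp only [Equiv.coe_addRight, hr.rel_add_add_iff, add_lt_add_iff_right,
      add_sub_right_comm x N N, add_le_add_iff_right]
  rw [mem_setoidArc, mem_setoidArc, hfirst, hr.rel_add_add_iff, add_le_add_iff_right,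
    add_lt_add_iff_right]

theorem isArcSystem_setoidArc (hN : 0 < N) (hr : IsTypeBSetoid N r) :
    IsArcSystem N (setoidArc N r) where
  subset_Ico _ _ hy := mem_Ico.2 (mem_setoidArc.1 hy).1
  eq_of_mem := setoidArc_unique
  nested := hr.setoidArc_nested hN
  add_mem_add_iff := hr.setoidArc_add_mem_add

end IsTypeBSetoid

/-- The classes are the unions of the translates of the arcs by multiples of `2N`, together with
the set of all points on no arc. -/
def arcSetoid (N : ℤ) (A : ℤ → Finset ℤ) : Setoid ℤ :=
  Setoid.ker fun y => {x | ∃ k : ℤ, y + k * (2 * N) ∈ A x}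

theorem arcSetoid_iff {y z : ℤ} : arcSetoid N A y z ↔
    ∀ x, (∃ k : ℤ, y + k * (2 * N) ∈ A x) ↔ ∃ k : ℤ, z + k * (2 * N) ∈ A x := by
  rw [arcSetoid, Setoid.ker_def, Set.ext_iff]
  rfl

theorem arcSetoid_add_mul (y k : ℤ) : arcSetoid N A y (y + k * (2 * N)) :=
  arcSetoid_iff.2 fun x => ⟨fun ⟨j, hj⟩ => ⟨j - k, by rwa [add_assoc, ← add_mul, add_sub_cancel]⟩,
    fun ⟨j, hj⟩ => ⟨k + j, by rwa [add_mul, ← add_assoc]⟩⟩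

namespace IsArcSystem

theorem add_mul_two_mul_mem_iff (hA : IsArcSystem N A) (x y k : ℤ) :
    y + k * (2 * N) ∈ A (x + k * (2 * N)) ↔ y ∈ A x := by
  rw [← mul_assoc, hA.add_mul_mem_iff]

theorem arcSetoid_of_mem (hA : IsArcSystem N A) {x y z : ℤ} (hy : y ∈ A x) (hz : z ∈ A x) :
    arcSetoid N A y z := by
  have imp {y z w : ℤ} (hy : y ∈ A x) (hz : z ∈ A x) :
      (∃ k : ℤ, y + k * (2 * N) ∈ A w) → ∃ k : ℤ, z + k * (2 * N) ∈ A w := by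
    rintro ⟨k, hk⟩
    have := hA.eq_of_mem hk ((hA.add_mul_two_mul_mem_iff x y k).2 hy)
    exact ⟨k, this ▸ (hA.add_mul_two_mul_mem_iff x z k).2 hz⟩
  exact arcSetoid_iff.2 fun w => ⟨imp hy hz, imp hz hy⟩

theorem arcSetoid_iff_of_mem (hA : IsArcSystem N A) {x y z : ℤ} (hy : y ∈ A x) :
    arcSetoid N A y z ↔ ∃ k : ℤ, z + k * (2 * N) ∈ A x :=
  ⟨fun h => (arcSetoid_iff.1 h x).1 ⟨0, by simpa using hy⟩, fun ⟨k, hk⟩ =>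
    Setoid.trans' _ (hA.arcSetoid_of_mem hy hk) (Setoid.symm' _ (arcSetoid_add_mul z k))⟩

theorem arcSetoid_iff_of_forall_notMem (hA : IsArcSystem N A) {y z : ℤ} (hy : ∀ x, y ∉ A x) :
    arcSetoid N A y z ↔ ∀ x, z ∉ A x := by
  have hshift {y : ℤ} (hy : ∀ x, y ∉ A x) (x k : ℤ) : y + k * (2 * N) ∉ A x := by
    rw [← sub_add_cancel x (k * (2 * N)), hA.add_mul_two_mul_mem_iff]
    exact hy _
  refine ⟨fun h x hz => ?_, fun hz => arcSetoid_iff.2 fun x => ?_⟩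
  · obtain ⟨k, hk⟩ := (hA.arcSetoid_iff_of_mem hz).1 (Setoid.symm' _ h)
    exact hshift hy x k hk
  · simp only [hshift hy, hshift hz]

theorem mem_Ioo_of_mem (hA : IsArcSystem N A) {a b c t w x : ℤ} (ha : a ∈ A x) (hc : c ∈ A x)
    (hb : b ∈ A w) (ht : t ∈ A w) (hxw : x < w) (hab : a < b) (hbc : b < c) : t ∈ Ioo a c := by
  have hout {u : ℤ} (hu : u ∈ A x) (hwu : w ≤ u) {v : ℤ} (hv : v ∈ A w) (huv : u ≤ v) : False := by
    obtain ⟨w', hww', hw'⟩ := hA.nested hv hwu huv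
    have := hA.eq_of_mem hw' hu
    omega
  have := hA.le_of_mem hb
  have := hA.le_of_mem ht
  rw [mem_Ioo]
  constructor <;> by_contra! hle
  · exact hout ha (by omega) hb hab.le
  · exact hout hc (by omega) ht hle

theorem arcSetoid_of_crosses_arc (hN : 0 < N) (hA : IsArcSystem N A) {a b c d x : ℤ} (hab : a < b)
    (hbc : b < c) (hcd : c < d) (hda : d < a + 2 * N) (ha : a ∈ A x) (hc : c ∈ A x)
    (hbd : arcSetoid N A b d) : arcSetoid N A a b := by
  obtain ⟨w, hxw, hb⟩ := hA.nested hc ((hA.le_of_mem ha).trans hab.le) hbc.le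
  rcases hxw.eq_or_lt with rfl | hxw
  · exact hA.arcSetoid_of_mem ha hb
  obtain ⟨k, hk⟩ := (hA.arcSetoid_iff_of_mem hb).1 hbd
  have hd := mem_Ioo.1 (hA.mem_Ioo_of_mem ha hc hb hk hxw hab hbc)
  rcases le_or_gt 0 k with h | h <;> nlinarith

theorem exists_mem_or_of_arcSetoid (hN : 0 < N) (hA : IsArcSystem N A) {a c x : ℤ} (ha : a ∈ A x)
    (hac : a ≤ c) (hca : c < a + 2 * N) (h : arcSetoid N A a c) :
    c ∈ A x ∨ ∃ w, c ∈ A w ∧ a + 2 * N ∈ A w := by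
  obtain ⟨k, hk⟩ := (hA.arcSetoid_iff_of_mem ha).1 h
  have := hA.le_of_mem ha
  have := hA.lt_of_mem ha
  have := hA.le_of_mem hk
  have := hA.lt_of_mem hk
  have hk' : k < 1 := by nlinarith
  have hk'' : -2 < k := by nlinarith
  obtain rfl | rfl : k = 0 ∨ k = -1 := by omega
  · exact .inl (by simpa using hk)
  · have hc := (hA.add_mul_two_mul_mem_iff _ _ 1).2 hk
    have ha := (hA.add_mul_two_mul_mem_iff _ _ 1).2 ha
    rw [neg_one_mul, one_mul, neg_add_cancel_right] at hc
    rw [one_mul] at ha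
    exact .inr ⟨_, hc, ha⟩

theorem arcSetoid_of_crosses (hN : 0 < N) (hA : IsArcSystem N A) {a b c d x : ℤ} (hab : a < b)
    (hbc : b < c) (hcd : c < d) (hda : d < a + 2 * N) (ha : a ∈ A x) (hac : arcSetoid N A a c)
    (hbd : arcSetoid N A b d) : arcSetoid N A a b := by
  rcases hA.exists_mem_or_of_arcSetoid hN ha (by omega) (by omega) hac with hc | ⟨w, hc, ha'⟩
  · exact hA.arcSetoid_of_crosses_arc hN hab hbc hcd hda ha hc hbd
  · have hb : arcSetoid N A b (b + 2 * N) := by simpa using arcSetoid_add_mul b 1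
    have hcd := hA.arcSetoid_of_crosses_arc hN hcd hda (by omega) (by omega) hc ha'
      (Setoid.trans' _ (Setoid.symm' _ hbd) hb)
    exact Setoid.trans' _ (Setoid.trans' _ hac hcd) (Setoid.symm' _ hbd)

theorem isTypeBSetoid_arcSetoid (hN : 0 < N) (hA : IsArcSystem N A) :
    IsTypeBSetoid N (arcSetoid N A) where
  rel_add_two_mul y := by simpa using arcSetoid_add_mul y 1
  rel_add_add_iff {y z} := by
    rw [arcSetoid_iff, arcSetoid_iff, ← (Equiv.addRight N).forall_congr_right]
    simp only [Equiv.coe_addRight, add_right_comm _ N, hA.add_mem_add_iff]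
  noncrossing {a b c d} hab hbc hcd hda hac hbd := by
    by_cases ha : ∃ x, a ∈ A x
    · obtain ⟨x, ha⟩ := ha
      exact hA.arcSetoid_of_crosses hN hab hbc hcd hda ha hac hbd
    by_cases hb : ∃ x, b ∈ A x
    · obtain ⟨x, hb⟩ := hb
      have ha : arcSetoid N A a (a + 2 * N) := by simpa using arcSetoid_add_mul a 1
      have hbc := hA.arcSetoid_of_crosses hN hbc hcd hda (by omega) hb hbd
        (Setoid.trans' _ (Setoid.symm' _ hac) ha)
      exact Setoid.trans' _ hac (Setoid.symm' _ hbc)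
    · push Not at ha hb
      exact (hA.arcSetoid_iff_of_forall_notMem ha).2 hb

theorem setoidArc_arcSetoid (hN : 0 < N) (hA : IsArcSystem N A) (x : ℤ) :
    setoidArc N (arcSetoid N A) x = A x := by
  ext y
  rw [mem_setoidArc]
  constructor
  · rintro ⟨hxy, h, hfirst⟩
    obtain ⟨w, hw⟩ : ∃ w, x ∈ A w := by
      by_contra! hx
      refine hfirst (x - N) le_rfl (by omega)
        (Setoid.symm' _ ((hA.arcSetoid_iff_of_forall_notMem hx).2 fun w => ?_))
      rw [← hA.add_mem_add_iff, sub_add_cancel]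
      exact hx _
    have hwx := hA.le_of_mem hw
    have := hA.lt_of_mem hw
    obtain rfl : w = x := by
      by_contra hne
      exact hfirst w (by omega) (by omega) (hA.arcSetoid_of_mem (hA.self_mem hw) hw)
    rcases hA.exists_mem_or_of_arcSetoid hN hw hxy.1 (by omega) h with hy | ⟨v, hy, hv⟩
    · exact hy
    · have := hA.le_of_mem hy
      have := hA.lt_of_mem hv
      omega
  · intro hy
    have hx := hA.self_mem hy
    refine ⟨⟨hA.le_of_mem hy, hA.lt_of_mem hy⟩, hA.arcSetoid_of_mem hx hy, fun z hz hzx h => ?_⟩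
    obtain ⟨k, hk⟩ := (hA.arcSetoid_iff_of_mem hx).1 (Setoid.symm' _ h)
    have := hA.le_of_mem hk
    have := hA.lt_of_mem hk
    rcases le_or_gt k 0 with h | h <;> nlinarith

end IsArcSystem

theorem IsTypeBSetoid.arcSetoid_setoidArc (hN : 0 < N) (hr : IsTypeBSetoid N r) :
    arcSetoid N (setoidArc N r) = r := by
  have hA := hr.isArcSystem_setoidArc hN
  ext y z
  by_cases hy : r y (y + N)
  · rw [hA.arcSetoid_iff_of_forall_notMem ((hr.forall_notMem_setoidArc_iff hN).2 hy),
      hr.forall_notMem_setoidArc_iff hN]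
    exact ⟨hr.rel_of_rel_antipode hN hy, fun h => (hr.rel_antipode_congr h).1 hy⟩
  · obtain ⟨x, hx⟩ := hr.exists_mem_setoidArc hN hy
    have hxy := (mem_setoidArc.1 hx).2.1
    simp only [hA.arcSetoid_iff_of_mem hx, mem_setoidArc_iff_of_mem hx, hr.rel_add_mul_iff]
    refine ⟨fun ⟨_, _, hz⟩ => r.trans' (r.symm' hxy) hz, fun hz => ?_⟩
    obtain ⟨k, hk, -⟩ := existsUnique_add_zsmul_mem_Ico (show 0 < 2 * N by omega) z (x - N)
    rw [Set.mem_Ico, smul_eq_mul] at hk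
    exact ⟨k, mem_Ico.2 (by omega), r.trans' hxy hz⟩

/-- A type `B` setoid is determined by its arcs, which form an arbitrary arc system. -/
noncomputable def setoidEquivArcSystem (hN : 0 < N) :
    {r // IsTypeBSetoid N r} ≃ {A // IsArcSystem N A} where
  toFun r := ⟨setoidArc N r.1, r.2.isArcSystem_setoidArc hN⟩
  invFun A := ⟨arcSetoid N A, A.2.isTypeBSetoid_arcSetoid hN⟩
  left_inv := fun ⟨_, hr⟩ => Subtype.ext (hr.arcSetoid_setoidArc hN)
  right_inv := fun ⟨_, hA⟩ => Subtype.ext <| funext fun x => hA.setoidArc_arcSetoid hN x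

end TypeBSetoids

section Finpartitions

open Finset
open scoped Fin.CommRing

theorem mem_parts_univ_iff {α : Type*} [Fintype α] [DecidableEq α]
    {P : Finpartition (univ : Finset α)} {B : Finset α} : B ∈ P.parts ↔ ∃ i, P.part i = B := by
  constructor
  · intro hB
    obtain ⟨i, hi⟩ := P.nonempty_of_mem_parts hB
    exact ⟨i, P.part_eq_of_mem hB hi⟩
  · rintro ⟨i, rfl⟩
    exact P.part_mem.2 (mem_univ i)

theorem mem_part_univ_iff {α : Type*} [Fintype α] [DecidableEq α]
    {P : Finpartition (univ : Finset α)} {i j : α} : i ∈ P.part j ↔ P.part i = P.part j :=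
  P.mem_part_iff_part_eq_part (mem_univ i) (mem_univ j)

theorem forall_image_mem_parts_iff {α : Type*} [Fintype α] [DecidableEq α]
    {P : Finpartition (univ : Finset α)} {σ : α → α} (hσ : Function.Involutive σ) :
    (∀ B ∈ P.parts, B.image σ ∈ P.parts) ↔
      ∀ i j, P.part (σ i) = P.part (σ j) ↔ P.part i = P.part j := by
  simp only [mem_parts_univ_iff, forall_exists_index, forall_apply_eq_imp_iff]
  constructor
  · intro h i j
    have himage (i : α) : P.part (σ i) = (P.part i).image σ := by
      obtain ⟨k, hk⟩ := h i
      rw [← hk, ← mem_part_univ_iff, hk]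
      exact mem_image_of_mem σ (mem_part_univ_iff.2 rfl)
    rw [himage, himage, (image_injective hσ.injective).eq_iff]
  · intro h i
    refine ⟨σ i, ?_⟩
    ext j
    rw [mem_part_univ_iff, ← hσ j, h, ← mem_part_univ_iff, hσ.injective.mem_finset_image]

variable {M : ℕ} [NeZero M]

theorem val_intCast_fin (y : ℤ) : (((y : Fin M) : ℕ) : ℤ) = y % M := by
  rw [Fin.val_intCast, Int.toNat_of_nonneg (Int.emod_nonneg y (by simp [NeZero.ne M]))]

variable {P : Finpartition (univ : Finset (Fin M))}

/-- The pullback to `ℤ` of a partition of the circle `Fin M`. -/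
def liftSetoid (P : Finpartition (univ : Finset (Fin M))) : Setoid ℤ :=
  Setoid.ker fun y => P.part (y : Fin M)

theorem liftSetoid_iff {y z : ℤ} : liftSetoid P y z ↔ P.part (y : Fin M) = P.part (z : Fin M) :=
  Iff.rfl

theorem liftSetoid_val_iff {i j : Fin M} :
    liftSetoid P (i : ℕ) (j : ℕ) ↔ P.part i = P.part j := by
  simp [liftSetoid_iff]

theorem liftSetoid_add_mul (y k : ℤ) : liftSetoid P y (y + k * M) := by
  simp [liftSetoid_iff]

open Classical in
/-- Partitions of the circle `Fin M` are the `M`-periodic equivalence relations on `ℤ`. -/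
noncomputable def finpartitionEquivSetoid (M : ℕ) [NeZero M] :
    Finpartition (univ : Finset (Fin M)) ≃ {r : Setoid ℤ // ∀ y, r y (y + M)} where
  toFun P := ⟨liftSetoid P, fun y => by simpa using liftSetoid_add_mul (P := P) y 1⟩
  invFun r := Finpartition.ofSetoid (r.1.comap fun i : Fin M => ((i : ℕ) : ℤ))
  left_inv P := by
    have hpart (i : Fin M) : (Finpartition.ofSetoid
        ((liftSetoid P).comap fun i : Fin M => ((i : ℕ) : ℤ))).part i = P.part i := by
      ext j
      rw [Finpartition.mem_part_ofSetoid_iff_rel, Setoid.comap_rel, liftSetoid_val_iff,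
        mem_part_univ_iff, eq_comm]
    ext B
    simp only [mem_parts_univ_iff, hpart]
  right_inv := fun ⟨r, hr⟩ => by
    have hmod (y : ℤ) : r y (y % M) := by
      rw [Int.emod_def, mul_comm, sub_eq_add_neg, ← neg_mul]
      exact rel_add_mul hr y _
    ext y z
    rw [liftSetoid_iff, eq_comm, ← mem_part_univ_iff, Finpartition.mem_part_ofSetoid_iff_rel,
      Setoid.comap_rel, val_intCast_fin, val_intCast_fin]
    exact ⟨fun h => r.trans' (hmod y) (r.trans' h (r.symm' (hmod z))),
      fun h => r.trans' (r.symm' (hmod y)) (r.trans' h (hmod z))⟩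

theorem IsNoncrossing.liftSetoid_of_lt (hP : IsNoncrossing P) {a b c d : ℤ} (ha : 0 ≤ a)
    (hab : a < b) (hbc : b < c) (hcd : c < d) (hd : d < M) (hac : liftSetoid P a c)
    (hbd : liftSetoid P b d) : liftSetoid P a b := by
  have hlt {y z : ℤ} (hy : 0 ≤ y) (hyz : y < z) (hz : z < M) : (y : Fin M) < (z : Fin M) := by
    rw [Fin.lt_def, ← Int.ofNat_lt, val_intCast_fin, val_intCast_fin,
      Int.emod_eq_of_lt hy (hyz.trans hz), Int.emod_eq_of_lt (hy.trans hyz.le) hz]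
    exact hyz
  exact hP _ (P.part_mem.2 (mem_univ _)) _ (P.part_mem.2 (mem_univ _)) _ _ _ _
    (hlt ha hab (by omega)) (hlt (by omega) hbc (by omega)) (hlt (by omega) hcd hd)
    (mem_part_univ_iff.2 rfl) (mem_part_univ_iff.2 hac.symm) (mem_part_univ_iff.2 rfl)
    (mem_part_univ_iff.2 hbd.symm)

-- A crossing `a < b < c < d` with `M ≤ d` is rotated to the crossing `d - M < a < b < c`.
theorem IsNoncrossing.liftSetoid_of_nonneg (hP : IsNoncrossing P) {a b c d : ℤ} (ha : 0 ≤ a)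
    (hab : a < b) (hbc : b < c) (hcd : c < d) (hda : d < a + M) (hac : liftSetoid P a c)
    (hbd : liftSetoid P b d) : liftSetoid P a b := by
  obtain ⟨n, hn⟩ : ∃ n : ℕ, d < M + n := ⟨d.toNat, by omega⟩
  induction n generalizing a b c d with
  | zero => exact hP.liftSetoid_of_lt ha hab hbc hcd (by simpa using hn) hac hbd
  | succ n ih =>
    rcases lt_or_ge d M with hd | hd
    · exact hP.liftSetoid_of_lt ha hab hbc hcd hd hac hbd
    · have hd' : liftSetoid P (d - M) d := by
        simpa using liftSetoid_add_mul (P := P) (d - M) 1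
      have := ih (a := d - M) (b := a) (by omega) (by omega) hab hbc (by omega)
        (Setoid.trans' _ hd' (Setoid.symm' _ hbd)) hac (by omega)
      exact Setoid.trans' _ (Setoid.symm' _ this)
        (Setoid.trans' _ hd' (Setoid.symm' _ hbd))

theorem isNoncrossing_iff : IsNoncrossing P ↔ ∀ {a b c d : ℤ}, a < b → b < c → c < d → d < a + M →
    liftSetoid P a c → liftSetoid P b d → liftSetoid P a b := by
  constructor
  · intro hP a b c d hab hbc hcd hda hac hbd
    obtain ⟨k, hk, -⟩ := existsUnique_add_zsmul_mem_Ico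
      (show (0 : ℤ) < M by exact_mod_cast NeZero.pos M) a 0
    rw [Set.mem_Ico, smul_eq_mul] at hk
    have hshift {y z : ℤ} : liftSetoid P (y + k * M) (z + k * M) ↔ liftSetoid P y z := by
      simp [liftSetoid_iff]
    rw [← hshift] at hac hbd ⊢
    exact hP.liftSetoid_of_nonneg hk.1 (by omega) (by omega) (by omega) (by omega) hac hbd
  · intro h B hB C hC a b c d hab hbc hcd ha hc hb hd
    rw [← P.part_eq_of_mem hB ha, ← P.part_eq_of_mem hC hb, ← liftSetoid_val_iff]
    refine h (c := (c : ℕ)) (d := (d : ℕ)) (by omega) (by omega) (by omega) (by omega) ?_ ?_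
    · rw [liftSetoid_val_iff, P.part_eq_of_mem hB ha, P.part_eq_of_mem hB hc]
    · rw [liftSetoid_val_iff, P.part_eq_of_mem hC hb, P.part_eq_of_mem hC hd]

theorem card_part (t y : ℤ) [DecidablePred (liftSetoid P y)] :
    #(P.part (y : Fin M)) = #{z ∈ Ico t (t + M) | liftSetoid P y z} := by
  symm
  refine card_bij (fun z _ => (z : Fin M)) (fun z hz => ?_) (fun z hz z' hz' h => ?_)
    (fun i hi => ?_)
  · exact mem_part_univ_iff.2 (mem_filter.1 hz).2.symm
  · have hz := mem_Ico.1 (mem_filter.1 hz).1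
    have hz' := mem_Ico.1 (mem_filter.1 hz').1
    rw [CharP.intCast_eq_intCast (Fin M) M, Int.modEq_iff_dvd] at h
    have := Int.eq_zero_of_abs_lt_dvd h (abs_lt.2 ⟨by omega, by omega⟩)
    omega
  · obtain ⟨k, hk, -⟩ := existsUnique_add_zsmul_mem_Ico
      (show (0 : ℤ) < M by exact_mod_cast NeZero.pos M) ((i : ℕ) : ℤ) t
    have hi' : (((i : ℕ) + k • (M : ℤ) : ℤ) : Fin M) = i := by simp
    refine ⟨_, mem_filter.2 ⟨mem_Ico.2 hk, ?_⟩, hi'⟩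
    rw [liftSetoid_iff, hi', mem_part_univ_iff.1 hi]

section TypeB

variable {N : ℕ} [NeZero N] {P : Finpartition (univ : Finset (Fin (2 * N)))}

theorem intCast_add_eq_negB (y : ℤ) : ((y + N : ℤ) : Fin (2 * N)) = negB N (y : Fin (2 * N)) := by
  ext
  rw [← Int.ofNat_inj, val_intCast_fin, negB]
  push_cast
  rw [val_intCast_fin]
  push_cast
  rw [Int.emod_add_emod]

theorem negB_involutive : Function.Involutive (negB N) := fun i => by
  have hi : (((i : ℕ) : ℤ) : Fin (2 * N)) = i := by simp
  calc
    negB N (negB N i) = (((i : ℕ) + N + N : ℤ) : Fin (2 * N)) := by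
      rw [intCast_add_eq_negB, intCast_add_eq_negB, hi]
    _ = (((i : ℕ) : ℤ) : Fin (2 * N)) :=
      (CharP.intCast_eq_intCast _ (2 * N)).2 (Int.modEq_iff_dvd.2 ⟨-1, by push_cast; ring⟩)
    _ = i := hi

theorem isTypeBSetoid_liftSetoid_iff : IsTypeBSetoid N (liftSetoid P) ↔
    IsNoncrossing P ∧ ∀ B ∈ P.parts, B.image (negB N) ∈ P.parts := by
  have hneg : (∀ B ∈ P.parts, B.image (negB N) ∈ P.parts) ↔
      ∀ y z : ℤ, liftSetoid P (y + N) (z + N) ↔ liftSetoid P y z := by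
    have hsurj : Function.Surjective fun y : ℤ => (y : Fin (2 * N)) := fun i => ⟨(i : ℕ), by simp⟩
    rw [forall_image_mem_parts_iff negB_involutive, hsurj.forall₂]
    simp only [liftSetoid_iff, intCast_add_eq_negB]
  rw [isNoncrossing_iff, hneg]
  push_cast
  constructor
  · exact fun h => ⟨h.noncrossing, fun _ _ => h.rel_add_add_iff⟩
  · rintro ⟨hnc, hadd⟩
    exact ⟨fun y => by simpa using liftSetoid_add_mul (P := P) y 1, hadd _ _, hnc⟩

/-- Invariant non-crossing partitions correspond to the type `B` setoids by lifting. -/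
noncomputable def noncrossingEquivTypeBSetoid (N : ℕ) [NeZero N] :
    {P : Finpartition (univ : Finset (Fin (2 * N))) //
      IsNoncrossing P ∧ ∀ B ∈ P.parts, B.image (negB N) ∈ P.parts} ≃
    {r // IsTypeBSetoid N r} :=
  ((finpartitionEquivSetoid (2 * N)).subtypeEquiv
    (q := fun r => IsTypeBSetoid N r.1) fun _ => isTypeBSetoid_liftSetoid_iff.symm).trans
  (Equiv.subtypeSubtypeEquivSubtype fun hr y => by simpa using hr.rel_add_two_mul y)

/-- Invariant non-crossing partitions correspond to the admissible weights: `P` goes to the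
function `x ↦ #(setoidArc N (liftSetoid P) x)`. -/
noncomputable def noncrossingEquivWeight (N : ℕ) [NeZero N] :
    {P : Finpartition (univ : Finset (Fin (2 * N))) //
      IsNoncrossing P ∧ ∀ B ∈ P.parts, B.image (negB N) ∈ P.parts} ≃ {F // IsArcWeight N F} :=
  have hN : (0 : ℤ) < N := by exact_mod_cast NeZero.pos N
  ((noncrossingEquivTypeBSetoid N).trans (setoidEquivArcSystem hN)).trans
    (arcSystemEquivWeight hN)

theorem noncrossingEquivWeight_apply (P : {P : Finpartition (univ : Finset (Fin (2 * N))) //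
      IsNoncrossing P ∧ ∀ B ∈ P.parts, B.image (negB N) ∈ P.parts}) (x : ℤ) :
    (noncrossingEquivWeight N P).1 x = #(setoidArc N (liftSetoid P.1) x) :=
  rfl

open Classical in
theorem card_setoidArc_of_mem {x y : ℤ} (hy : y ∈ setoidArc N (liftSetoid P) x) :
    #(setoidArc N (liftSetoid P) x) = #(P.part (x : Fin (2 * N))) := by
  rw [card_part (x - N) x, show x - (N : ℤ) + (2 * N : ℕ) = x + N by push_cast; ring]
  congr 1
  ext z
  rw [mem_setoidArc_iff_of_mem hy, mem_filter]

/-- Divisibility passes from all the other blocks to the zero block since all blocks together have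
`2 * N` elements. -/
theorem forall_dvd_card_parts_iff {m : ℕ} (hm : m ∣ N) (hP : IsTypeBSetoid N (liftSetoid P)) :
    (∀ B ∈ P.parts, m ∣ #B) ↔ ∀ x, m ∣ #(setoidArc N (liftSetoid P) x) := by
  have hN : (0 : ℤ) < N := by exact_mod_cast NeZero.pos N
  constructor
  · intro h x
    rcases (setoidArc N (liftSetoid P) x).eq_empty_or_nonempty with hx | ⟨y, hy⟩
    · simp [hx]
    · rw [card_setoidArc_of_mem hy]
      exact h _ (P.part_mem.2 (mem_univ _))
  · intro h
    have hnonzero (y : ℤ) (hy : ¬ liftSetoid P y (y + N)) : m ∣ #(P.part (y : Fin (2 * N))) := by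
      obtain ⟨x, hx⟩ := hP.exists_mem_setoidArc hN hy
      rw [← liftSetoid_iff.1 (mem_setoidArc.1 hx).2.1, ← card_setoidArc_of_mem hx]
      exact h x
    intro B hB
    obtain ⟨i, rfl⟩ := mem_parts_univ_iff.1 hB
    have hval (j : Fin (2 * N)) : (((j : ℕ) : ℤ) : Fin (2 * N)) = j := by simp
    by_cases hi : liftSetoid P (i : ℕ) ((i : ℕ) + N)
    · have hothers : m ∣ ∑ B ∈ P.parts.erase (P.part i), #B := dvd_sum fun C hC => by
        rw [mem_erase] at hC
        obtain ⟨j, rfl⟩ := mem_parts_univ_iff.1 hC.2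
        rw [← hval j]
        exact hnonzero _ fun hj =>
          hC.1 (liftSetoid_val_iff.1 (hP.rel_of_rel_antipode hN hj hi))
      have hsum := add_sum_erase P.parts card hB
      rw [P.sum_card_parts, card_univ, Fintype.card_fin] at hsum
      exact (Nat.dvd_add_left hothers).1 (hsum.symm ▸ hm.mul_left 2)
    · exact hval i ▸ hnonzero _ hi

theorem exists_mem_parts_iff_setoidArc_eq_empty (hP : IsTypeBSetoid N (liftSetoid P))
    {z : Fin (2 * N)} (hz : (z : ℕ) = 0) :
    (∃ B ∈ P.parts, z ∈ B ∧ ∃ i ∈ B, N ≤ (i : ℕ)) ↔ setoidArc N (liftSetoid P) 0 = ∅ := by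
  rw [hP.setoidArc_eq_empty_iff (by exact_mod_cast NeZero.pos N)]
  have hz' : ((0 : ℤ) : Fin (2 * N)) = z := by
    ext
    simp [hz]
  constructor
  · rintro ⟨B, hB, hzB, i, hi, hNi⟩
    refine ⟨(i : ℕ), mem_Ico.2 (by omega), ?_⟩
    rw [liftSetoid_iff, hz', P.part_eq_of_mem hB hzB, ← P.part_eq_of_mem hB hi]
    simp
  · rintro ⟨u, hu, h⟩
    rw [mem_Ico] at hu
    refine ⟨P.part z, P.part_mem.2 (mem_univ z), mem_part_univ_iff.2 rfl, u,
      mem_part_univ_iff.2 (hz' ▸ h.symm), ?_⟩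
    rw [← Int.ofNat_le, val_intCast_fin, Int.emod_eq_of_lt (by omega) (by omega)]
    omega

end TypeB

end Finpartitions

section Counting

open Finset
open scoped Fin.CommRing

theorem sum_update_add {ι : Type*} [Fintype ι] [DecidableEq ι] (g : ι → ℕ) (i : ι) (b : ℕ) :
    ∑ j, Function.update g i b j + g i = ∑ j, g j + b := by
  have hself := sum_update_of_mem (mem_univ i) g (g i)
  rw [Function.update_eq_self] at hself
  rw [hself, sum_update_of_mem (mem_univ i)]
  ring

/-- Adjusting the value at `i₀` so that the sum becomes `n` turns `m • g` with `g i₀ = 0` and sum at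
most `m * n` into a function of sum `n`. -/
def divisibleEquivSumEq {ι : Type*} [Fintype ι] [DecidableEq ι] (i₀ : ι) {m : ℕ} (hm : 0 < m)
    (n : ℕ) : {f : ι → ℕ // ∑ i, f i ≤ m * n ∧ (∀ i, m ∣ f i) ∧ f i₀ = 0} ≃
      {g : ι → ℕ // ∑ i, g i = n} where
  toFun := fun ⟨f, hsum, hdvd, hf⟩ =>
    ⟨Function.update (fun i => f i / m) i₀ (n - ∑ i, f i / m), by
      have hle : ∑ i, f i / m ≤ n := by
        rw [← Nat.sum_div fun i _ => hdvd i]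
        exact Nat.div_le_of_le_mul hsum
      have := sum_update_add (fun i => f i / m) i₀ (n - ∑ i, f i / m)
      simp only [hf, Nat.zero_div] at this
      omega⟩
  invFun := fun ⟨g, hsum⟩ => ⟨fun i => m * Function.update g i₀ 0 i, by
    refine ⟨?_, fun i => dvd_mul_right _ _, by simp⟩
    rw [← mul_sum]
    have := sum_update_add g i₀ 0
    exact Nat.mul_le_mul_left m (by omega)⟩
  left_inv := fun ⟨f, hsum, hdvd, hf⟩ => by
    ext i
    simp only [Function.update_idem]
    rcases eq_or_ne i i₀ with rfl | hi
    · simp [hf]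
    · rw [Function.update_of_ne hi, Nat.mul_div_cancel' (hdvd i)]
  right_inv := fun ⟨g, hsum⟩ => by
    have := sum_update_add g i₀ 0
    have hslack : n - ∑ i, Function.update g i₀ 0 i = g i₀ := by omega
    simp only [Nat.mul_div_cancel_left _ hm, hslack, Function.update_idem, Function.update_eq_self]

open Classical in
theorem card_sum_eq (ι : Type*) [Fintype ι] (n : ℕ) :
    Nat.card {g : ι → ℕ // ∑ i, g i = n} = (Fintype.card ι).multichoose n := by
  rw [← Nat.card_congr (Sym.equivNatSumOfFintype ι n), Nat.card_eq_fintype_card,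
    Sym.card_sym_eq_multichoose]

variable {N : ℕ} [NeZero N]

theorem periodic_comp_intCast {α : Type*} (f : Fin N → α) :
    Function.Periodic (fun x : ℤ => f x) N := fun x => by
  simp

theorem apply_val_intCast_fin {α : Type*} {F : ℤ → α} (hF : Function.Periodic F N) (x : ℤ) :
    F ((x : Fin N) : ℕ) = F x := by
  rw [val_intCast_fin, Int.emod_def, mul_comm, ← smul_eq_mul, hF.sub_zsmul_eq]

theorem sum_Ico_zero_natCast (F : ℤ → ℕ) (N : ℕ) : ∑ x ∈ Ico (0 : ℤ) N, F x = ∑ i : Fin N, F i := by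
  rw [Fin.sum_univ_eq_sum_range (fun i => F i), Int.Ico_eq_finset_map, sum_map]
  simp

/-- A weight is determined by its values over one period. -/
def arcWeightEquiv (N : ℕ) [NeZero N] :
    {F // IsArcWeight N F} ≃ {f : Fin N → ℕ // ∑ i, f i ≤ N} where
  toFun := fun ⟨F, hF⟩ => ⟨fun i => F i, by
    rw [← sum_Ico_zero_natCast]
    exact_mod_cast hF.sum_le⟩
  invFun := fun ⟨f, hf⟩ => ⟨fun x => f x, periodic_comp_intCast f, by
    rw [sum_Ico_zero_natCast fun x => f x]
    exact Nat.cast_le.2 (by simpa using hf)⟩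
  left_inv := fun ⟨F, hF⟩ => Subtype.ext <| funext <| apply_val_intCast_fin hF.periodic
  right_inv := fun ⟨_, _⟩ => by simp

theorem card_isArcWeight_dvd {m n : ℕ} [NeZero (m * n)] (hm : 0 < m) :
    Nat.card {F : {F // IsArcWeight (m * n : ℕ) F} // (∀ x, m ∣ F.1 x) ∧ F.1 0 = 0} =
      (m * n).multichoose n := by
  have hcond (F : {F // IsArcWeight (m * n : ℕ) F}) : ((∀ x, m ∣ F.1 x) ∧ F.1 0 = 0) ↔
      (∀ i, m ∣ (arcWeightEquiv (m * n) F).1 i) ∧ (arcWeightEquiv (m * n) F).1 0 = 0 := by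
    refine and_congr ⟨fun h i => h i, fun h x => ?_⟩ (by simp [arcWeightEquiv])
    rw [← apply_val_intCast_fin F.2.periodic]
    exact h x
  have e := ((arcWeightEquiv (m * n)).subtypeEquiv hcond).trans <|
    (Equiv.subtypeSubtypeEquivSubtypeInter (fun f : Fin (m * n) → ℕ => ∑ i, f i ≤ m * n)
      fun f => (∀ i, m ∣ f i) ∧ f 0 = 0).trans (divisibleEquivSumEq 0 hm n)
  rw [Nat.card_congr e, card_sum_eq, Fintype.card_fin]

end Counting

theorem sum_choose_sub_two {k : ℕ} (hk : 2 ≤ k) (n : ℕ) :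
    ∑ a ∈ Finset.range (n + 1), (k + n - a - 2).choose (n - a) = (k + n - 1).choose n := by
  calc
    _ = ∑ a ∈ Finset.range (n + 1), (k - 1).multichoose (n + 1 - 1 - a) := by
      refine Finset.sum_congr rfl fun a ha => ?_
      have := Finset.mem_range.1 ha
      rw [Nat.multichoose_eq]
      congr 1
      omega
    _ = (n + (k - 1)).choose (k - 1) := by
      rw [Finset.sum_range_reflect, Nat.sum_range_multichoose]
    _ = (k + n - 1).choose n := by
      rw [← Nat.choose_symm_add]
      congr 1
      omega

/-- For positive integers `m` and `n` with `n ≥ 2`, the number of positive `m`-divisible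
non-crossing partitions of type `B_n` (non-crossing partitions of
`{1, …, mn, -1, …, -mn}` invariant under `i ↦ -i`, with all block sizes divisible by `m`,
such that the block containing `1` also contains a negative number) equals
`C((m+1)n - 1, n)`, and this equals `∑_{a=0}^{n} C((m+1)n - a - 2, n - a)`. -/
theorem stmt15 (m n : ℕ) (hm : 0 < m) (hn : 2 ≤ n) :
    Nat.card {P : Finpartition (Finset.univ : Finset (Fin (2 * (m * n)))) //
        IsNoncrossing P ∧
        (∀ B ∈ P.parts, B.image (negB (m * n)) ∈ P.parts) ∧
        (∀ B ∈ P.parts, m ∣ B.card) ∧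
        ∃ B ∈ P.parts,
          (⟨0, Nat.mul_pos (by norm_num) (Nat.mul_pos hm (by omega))⟩ :
            Fin (2 * (m * n))) ∈ B ∧
          ∃ x ∈ B, m * n ≤ x.val} =
      Nat.choose ((m + 1) * n - 1) n ∧
    Nat.choose ((m + 1) * n - 1) n =
      ∑ a ∈ Finset.range (n + 1), Nat.choose ((m + 1) * n - a - 2) (n - a) := by
  have : NeZero (m * n) := ⟨by positivity⟩
  rw [add_one_mul]
  refine ⟨?_, (sum_choose_sub_two (hn.trans (Nat.le_mul_of_pos_left n hm)) n).symm⟩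
  rw [← Nat.multichoose_eq, ← card_isArcWeight_dvd hm]
  refine Nat.card_congr <| (Equiv.subtypeEquivRight fun P => and_assoc.symm).trans <|
    (Equiv.subtypeSubtypeEquivSubtypeInter _ _).symm.trans <|
    (noncrossingEquivWeight (m * n)).subtypeEquiv fun ⟨P, hP⟩ => ?_
  have hlift := isTypeBSetoid_liftSetoid_iff.2 hP
  simp only [noncrossingEquivWeight_apply, Finset.card_eq_zero]
  exact and_congr (forall_dvd_card_parts_iff (Nat.dvd_mul_right m n) hlift)
    (exists_mem_parts_iff_setoidArc_eq_empty hlift rfl)
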